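/- If f ∈ H_α and y ∈ ℝ^M satisfies |y_m − f(x⁽ᵐ⁾)| ≤ ε_m for all m, then max_{1≤m≤M}(y_m − ε_m) ≤ max[f] ≤ max_{1≤m≤M} y_m + max_{x∈X} u_{0,ε}(x), where max[f] = max_{x∈X} f(x) and u_{0,ε}(x) = min_{1≤m≤M}(ε_m + dist(x,x⁽ᵐ⁾)^α). -/

import Mathlib

/-! For the upper bound, put `S = max_m y_m`. Then `f - S` lies in the same class as `f` and is at
most `ε_m` at the site `x⁽ᵐ⁾`. Since `u_{0,ε}` is the McShane extension of `ε`, it dominates every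
function of the class with these bounds at the sites, so `f - S ≤ u_{0,ε}`. -/

section McShane

variable {X ι : Type*} {ω : X → X → ℝ} {xs : ι → X} {v : ι → ℝ} {f : X → ℝ}

/-- The McShane extension to `X` of values `v` prescribed at sites `xs`, for the class of functions
`f` with `f x - f x' ≤ ω x x'`. The paper's `u_{0,ε}` is the case `v = ε`,
`ω x x' = dist x x' ^ α`. The minimum over the sites is encoded as an infimum in `ℝ`, which is `0`
if there are no sites or the sums `v m + ω x (xs m)` are not bounded below. -/
noncomputable def mcShaneExtension (ω : X → X → ℝ) (xs : ι → X) (v : ι → ℝ) (x : X) : ℝ :=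
  ⨅ m, (v m + ω x (xs m))

theorem le_mcShaneExtension [Nonempty ι] (hf : ∀ x x', f x - f x' ≤ ω x x')
    (hv : ∀ m, f (xs m) ≤ v m) (x : X) : f x ≤ mcShaneExtension ω xs v x :=
  le_ciInf fun m => by linarith [hf x (xs m), hv m]

theorem mcShaneExtension_le [Finite ι] (x : X) (m : ι) :
    mcShaneExtension ω xs v x ≤ v m + ω x (xs m) :=
  ciInf_le (Set.finite_range _).bddBelow m

theorem bddAbove_range_mcShaneExtension [Finite ι] (m : ι)
    (hω : BddAbove (Set.range fun x => ω x (xs m))) :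
    BddAbove (Set.range (mcShaneExtension ω xs v)) := by
  obtain ⟨C, hC⟩ := hω
  refine ⟨v m + C, Set.forall_mem_range.2 fun x => (mcShaneExtension_le x m).trans ?_⟩
  gcongr
  exact hC (Set.mem_range_self x)

theorem le_ciSup_add_mcShaneExtension [Nonempty ι] {y ε : ι → ℝ}
    (hf : ∀ x x', f x - f x' ≤ ω x x') (hy : BddAbove (Set.range y))
    (hfy : ∀ m, f (xs m) ≤ y m + ε m) (x : X) :
    f x ≤ (⨆ m, y m) + mcShaneExtension ω xs ε x := by
  have hshift : ∀ x x', (f x - ⨆ m, y m) - (f x' - ⨆ m, y m) ≤ ω x x' := fun x x' => by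
    simpa only [sub_sub_sub_cancel_right] using hf x x'
  have hsites : ∀ m, f (xs m) - ⨆ m, y m ≤ ε m := fun m => by
    linarith [hfy m, le_ciSup hy m]
  exact sub_le_iff_le_add'.1 (le_mcShaneExtension hshift hsites x)

end McShane

theorem bddAbove_range_dist_rpow {X : Type*} [PseudoMetricSpace X] [BoundedSpace X] {α : ℝ}
    (hα : 0 ≤ α) (x₀ : X) : BddAbove (Set.range fun x => dist x x₀ ^ α) := by
  refine ⟨Metric.diam (Set.univ : Set X) ^ α, Set.forall_mem_range.2 fun x => ?_⟩
  gcongr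
  exact Metric.dist_le_diam_of_mem (Bornology.IsBounded.all _) (Set.mem_univ x) (Set.mem_univ x₀)

theorem stmt12_general {X ι : Type*} [Nonempty ι] (ω : X → X → ℝ) {xs : ι → X} {ε y : ι → ℝ}
    {f : X → ℝ} (hf : ∀ x x', f x - f x' ≤ ω x x') (hy : ∀ m, |y m - f (xs m)| ≤ ε m)
    (hy_bdd : BddAbove (Set.range y))
    (hu_bdd : BddAbove (Set.range (mcShaneExtension ω xs ε))) :
    (⨆ m, (y m - ε m)) ≤ (⨆ x, f x) ∧
      (⨆ x, f x) ≤ (⨆ m, y m) + ⨆ x, mcShaneExtension ω xs ε x := by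
  have : Nonempty X := Nonempty.map xs ‹_›
  have hf_le : ∀ x, f x ≤ (⨆ m, y m) + ⨆ x, mcShaneExtension ω xs ε x := fun x =>
    calc f x ≤ (⨆ m, y m) + mcShaneExtension ω xs ε x :=
          le_ciSup_add_mcShaneExtension hf hy_bdd (fun m => by linarith [(abs_le.1 (hy m)).1]) x
      _ ≤ (⨆ m, y m) + ⨆ x, mcShaneExtension ω xs ε x := by gcongr; exact le_ciSup hu_bdd x
  have hf_bdd : BddAbove (Set.range f) := ⟨_, Set.forall_mem_range.2 hf_le⟩
  refine ⟨ciSup_le fun m => ?_, ciSup_le hf_le⟩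
  exact (sub_le_comm.1 (abs_le.1 (hy m)).2).trans (le_ciSup hf_bdd (xs m))

/-- If `f ∈ H_α` and `|y_m - f(x⁽ᵐ⁾)| ≤ ε_m` for all `m`, then
`max_m (y_m - ε_m) ≤ max[f] ≤ max_m y_m + max_x u_{0,ε}(x)`. -/
theorem stmt12 {X : Type*} [MetricSpace X] [CompactSpace X] [Nonempty X]
    (α : ℝ) (hα : 0 < α) (hα1 : α ≤ 1)
    (M : ℕ) (hM : 0 < M) (xs : Fin M → X) (ε : Fin M → ℝ) (hε : ∀ m, 0 ≤ ε m)
    (f : X → ℝ) (hf : ∀ x x' : X, |f x - f x'| ≤ dist x x' ^ α)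
    (y : Fin M → ℝ) (hy : ∀ m, |y m - f (xs m)| ≤ ε m) :
    (⨆ m : Fin M, (y m - ε m)) ≤ (⨆ x : X, f x) ∧
      (⨆ x : X, f x) ≤ (⨆ m : Fin M, y m) +
        ⨆ x : X, ⨅ m : Fin M, (ε m + dist x (xs m) ^ α) := by
  have : Nonempty (Fin M) := ⟨⟨0, hM⟩⟩
  exact stmt12_general (fun x x' => dist x x' ^ α) (fun x x' => (le_abs_self _).trans (hf x x'))
    hy (Set.finite_range y).bddAbove
    (bddAbove_range_mcShaneExtension ⟨0, hM⟩ (bddAbove_range_dist_rpow hα.le _))
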